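/- Substitution lemma for the weight, §-case: let V be a well-formed closed SHOπ value (⊩ V) and n ≥ m ≥ 1 natural numbers. If Γ,§x ⊩ R is a well-formed SHOπ process judgement, then W_m(R[V/x]) ≤ W_n(R) + n_o(x,R)·W_n(V), where n_o(x,R) is the number of free occurrences of x in R; likewise if Γ,§x ⊩ W is a well-formed value judgement, then W_m(W[V/x]) ≤ W_n(W) + n_o(x,W)·W_n(V). -/

import Mathlib

/-! Substituting `V` for a §-marked variable `x` replaces each occurrence of `x` (of weight `1`) by
a copy of `V`. Occurrences inside a box `!W` would have their contribution multiplied, but the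
context splitting discipline makes the entry of `x` in the context of a box body absent
(`bangCtx_entry`), and absent variables do not occur (`foV_eq_zero`). Hence every occurrence of `x`
contributes at most `W_n(V)` additively, while replacing `n` by `m ≤ n` only lowers the weight.

The induction (`wV_subst_le`, `wP_subst_le`) is over the syntax, for an arbitrary de Bruijn index
`k` whose entry is §-marked or absent: absent entries have to be included because a splitting may
give `x` to only one of the two premises, and because of box bodies. Passing under a binder lifts
the substituted value, which leaves its weight unchanged (`wV_lift`). -/


/-! Syntax of LHOπ / SHOπ processes and values (variables in de Bruijn style,
channels as names). -/

mutual
inductive Val : Type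
  | star : Val
  | var : ℕ → Val
  | lam : Proc → Val
  | blam : Proc → Val
  | bang : Val → Val
inductive Proc : Type
  | nil : Proc
  | par : Proc → Proc → Proc
  | inp : ℕ → Proc → Proc
  | binp : ℕ → Proc → Proc
  | out : ℕ → Val → Proc → Proc
  | nu : ℕ → Proc → Proc
  | app : Val → Val → Proc
end

/-! Lifting and capture-avoiding substitution. -/

mutual
def liftV (c : ℕ) : Val → Val
  | .star => .star
  | .var x => if x < c then .var x else .var (x + 1)
  | .lam P => .lam (liftP (c + 1) P)
  | .blam P => .blam (liftP (c + 1) P)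
  | .bang V => .bang (liftV c V)
def liftP (c : ℕ) : Proc → Proc
  | .nil => .nil
  | .par P Q => .par (liftP c P) (liftP c Q)
  | .inp a P => .inp a (liftP (c + 1) P)
  | .binp a P => .binp a (liftP (c + 1) P)
  | .out a V P => .out a (liftV c V) (liftP c P)
  | .nu a P => .nu a (liftP c P)
  | .app V W => .app (liftV c V) (liftV c W)
end

mutual
def substV (U : Val) (k : ℕ) : Val → Val
  | .star => .star
  | .var x => if x = k then U else if x < k then .var x else .var (x - 1)
  | .lam P => .lam (substP (liftV 0 U) (k + 1) P)
  | .blam P => .blam (substP (liftV 0 U) (k + 1) P)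
  | .bang V => .bang (substV U k V)
def substP (U : Val) (k : ℕ) : Proc → Proc
  | .nil => .nil
  | .par P Q => .par (substP U k P) (substP U k Q)
  | .inp a P => .inp a (substP (liftV 0 U) (k + 1) P)
  | .binp a P => .binp a (substP (liftV 0 U) (k + 1) P)
  | .out a V P => .out a (substV U k V) (substP U k P)
  | .nu a P => .nu a (substP U k P)
  | .app V W => .app (substV U k V) (substV U k W)
end

/-! Free channels and channel renaming (for α-conversion of restrictions). -/

mutual
def fcV : Val → Finset ℕ
  | .star => ∅
  | .var _ => ∅
  | .lam P => fcP P
  | .blam P => fcP P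
  | .bang V => fcV V
def fcP : Proc → Finset ℕ
  | .nil => ∅
  | .par P Q => fcP P ∪ fcP Q
  | .inp a P => insert a (fcP P)
  | .binp a P => insert a (fcP P)
  | .out a V P => insert a (fcV V ∪ fcP P)
  | .nu a P => fcP P \ {a}
  | .app V W => fcV V ∪ fcV W
end

mutual
def chV (a b : ℕ) : Val → Val
  | .star => .star
  | .var x => .var x
  | .lam P => .lam (chP a b P)
  | .blam P => .blam (chP a b P)
  | .bang V => .bang (chV a b V)
def chP (a b : ℕ) : Proc → Proc
  | .nil => .nil
  | .par P Q => .par (chP a b P) (chP a b Q)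
  | .inp c P => .inp (if c = a then b else c) (chP a b P)
  | .binp c P => .binp (if c = a then b else c) (chP a b P)
  | .out c V P => .out (if c = a then b else c) (chV a b V) (chP a b P)
  | .nu c P => if c = a then .nu c P else .nu c (chP a b P)
  | .app V W => .app (chV a b V) (chV a b W)
end

/-! Structural congruence: the smallest congruence containing α-equivalence
(for channel restrictions; α-equivalence of variables is syntactic identity in
de Bruijn style), associativity and commutativity of parallel composition,
exchange of restrictions, and scope extrusion.  No garbage-collection laws. -/

mutual
inductive SCV : Val → Val → Prop
  | refl (V) : SCV V V
  | symm : SCV V W → SCV W V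
  | trans : SCV U V → SCV V W → SCV U W
  | lam : SCP P Q → SCV (.lam P) (.lam Q)
  | blam : SCP P Q → SCV (.blam P) (.blam Q)
  | bang : SCV V W → SCV (.bang V) (.bang W)
inductive SCP : Proc → Proc → Prop
  | refl (P) : SCP P P
  | symm : SCP P Q → SCP Q P
  | trans : SCP P Q → SCP Q R → SCP P R
  | par : SCP P P' → SCP Q Q' → SCP (.par P Q) (.par P' Q')
  | inp : SCP P Q → SCP (.inp a P) (.inp a Q)
  | binp : SCP P Q → SCP (.binp a P) (.binp a Q)
  | out : SCV V W → SCP P Q → SCP (.out a V P) (.out a W Q)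
  | nu : SCP P Q → SCP (.nu a P) (.nu a Q)
  | app : SCV V V' → SCV W W' → SCP (.app V W) (.app V' W')
  | assoc : SCP (.par P (.par Q R)) (.par (.par P Q) R)
  | comm : SCP (.par P Q) (.par Q P)
  | nuswap : SCP (.nu a (.nu b P)) (.nu b (.nu a P))
  | extrude : a ∉ fcP Q → SCP (.nu a (.par P Q)) (.par (.nu a P) Q)
  | alpha : b ∉ fcP P → SCP (.nu a P) (.nu b (chP a b P))
end

/-! Reduction. -/

inductive Red : Proc → Proc → Prop
  | comm : Red (.par (.out a V P) (.inp a Q)) (.par P (substP V 0 Q))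
  | bcomm : Red (.par (.out a (.bang V) P) (.binp a Q)) (.par P (substP V 0 Q))
  | beta : Red (.app (.lam P) V) (substP V 0 P)
  | bbeta : Red (.app (.blam P) (.bang V)) (substP V 0 P)
  | parL : Red P Q → Red (.par P R) (.par Q R)
  | res : Red P Q → Red (.nu a P) (.nu a Q)
  | struct : SCP P P' → Red P' Q' → SCP Q' Q → Red P Q

/-- `m`-step reduction. -/
inductive RedN : ℕ → Proc → Proc → Prop
  | zero : RedN 0 P P
  | succ : Red P Q → RedN n Q R → RedN (n + 1) P R

/-! SHOπ well-formation.  A context entry is `none` (absent) or a marker: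
linear `x`, nonlinear `!x`, or nonlinear `§x`. -/

inductive SMark : Type
  | lin : SMark
  | bang : SMark
  | para : SMark
deriving DecidableEq

abbrev Ctx := List (Option SMark)

/-- Contexts made only of §-marked (or absent) variables: these admit
weakening. -/
def ParaOnly (Γ : Ctx) : Prop := ∀ e ∈ Γ, e = none ∨ e = some .para

/-- Splitting one context entry between the two premises of a binary rule:
linear and !-variables go to exactly one premise, §-variables may be shared
(implicit contraction). -/
inductive SplitE : Option SMark → Option SMark → Option SMark → Prop
  | none : SplitE none none none
  | linL : SplitE (some .lin) (some .lin) none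
  | linR : SplitE (some .lin) none (some .lin)
  | bangL : SplitE (some .bang) (some .bang) none
  | bangR : SplitE (some .bang) none (some .bang)
  | paraL : SplitE (some .para) (some .para) none
  | paraR : SplitE (some .para) none (some .para)
  | paraB : SplitE (some .para) (some .para) (some .para)

inductive Split : Ctx → Ctx → Ctx → Prop
  | nil : Split [] [] []
  | cons : SplitE e e₁ e₂ → Split Γ Γ₁ Γ₂ → Split (e :: Γ) (e₁ :: Γ₁) (e₂ :: Γ₂)

/-- Entry-wise relation between the context of `V` and the context of `!V`:
linear variables become !-marked ones, and weakening by §-variables is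
allowed.  §- and !-variables may not appear inside a !-box. -/
inductive BangE : Option SMark → Option SMark → Prop
  | lin : BangE (some .lin) (some .bang)
  | none : BangE none none
  | para : BangE none (some .para)

inductive BangCtx : Ctx → Ctx → Prop
  | nil : BangCtx [] []
  | cons : BangE e e' → BangCtx Γ Γ' → BangCtx (e :: Γ) (e' :: Γ')

mutual
inductive WfV : Ctx → Val → Prop
  | star : ParaOnly Γ → WfV Γ .star
  | varLin : ParaOnly Γ → WfV (some .lin :: Γ) (.var 0)
  | varPara : ParaOnly Γ → WfV (some .para :: Γ) (.var 0)
  | varThere : (e = none ∨ e = some SMark.para) → WfV Γ (.var x) →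
      WfV (e :: Γ) (.var (x + 1))
  | lam : WfP (some .lin :: Γ) P → WfV Γ (.lam P)
  | blamBang : WfP (some .bang :: Γ) P → WfV Γ (.blam P)
  | blamPara : WfP (some .para :: Γ) P → WfV Γ (.blam P)
  | bang : BangCtx Γ Δ → WfV Γ V → WfV Δ (.bang V)
inductive WfP : Ctx → Proc → Prop
  | nil : ParaOnly Γ → WfP Γ .nil
  | par : Split Γ Γ₁ Γ₂ → WfP Γ₁ P → WfP Γ₂ Q → WfP Γ (.par P Q)
  | inp : WfP (some .lin :: Γ) P → WfP Γ (.inp a P)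
  | binpBang : WfP (some .bang :: Γ) P → WfP Γ (.binp a P)
  | binpPara : WfP (some .para :: Γ) P → WfP Γ (.binp a P)
  | out : Split Γ Γ₁ Γ₂ → WfV Γ₁ V → WfP Γ₂ P → WfP Γ (.out a V P)
  | nu : WfP Γ P → WfP Γ (.nu a P)
  | app : Split Γ Γ₁ Γ₂ → WfV Γ₁ V → WfV Γ₂ W → WfP Γ (.app V W)
end

/-! Measures: size, box depth, free occurrences, duplicability factor,
parametrized weight, weight. -/

mutual
def sizeV : Val → ℕ
  | .star => 1
  | .var _ => 1
  | .lam P => sizeP P + 1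
  | .blam P => sizeP P + 1
  | .bang V => sizeV V + 1
def sizeP : Proc → ℕ
  | .nil => 1
  | .par P Q => sizeP P + sizeP Q + 1
  | .inp _ P => sizeP P + 1
  | .binp _ P => sizeP P + 1
  | .out _ V P => sizeV V + sizeP P + 1
  | .nu _ P => sizeP P + 1
  | .app V W => sizeV V + sizeV W + 1
end

mutual
def bdV : Val → ℕ
  | .star => 0
  | .var _ => 0
  | .lam P => bdP P
  | .blam P => bdP P
  | .bang V => bdV V + 1
def bdP : Proc → ℕ
  | .nil => 0
  | .par P Q => max (bdP P) (bdP Q)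
  | .inp _ P => bdP P
  | .binp _ P => bdP P
  | .out _ V P => max (bdV V) (bdP P)
  | .nu _ P => bdP P
  | .app V W => max (bdV V) (bdV W)
end

-- Number of free occurrences of the variable (de Bruijn index) `k`.
mutual
def foV (k : ℕ) : Val → ℕ
  | .star => 0
  | .var x => if x = k then 1 else 0
  | .lam P => foP (k + 1) P
  | .blam P => foP (k + 1) P
  | .bang V => foV k V
def foP (k : ℕ) : Proc → ℕ
  | .nil => 0
  | .par P Q => foP k P + foP k Q
  | .inp _ P => foP (k + 1) P
  | .binp _ P => foP (k + 1) P
  | .out _ V P => foV k V + foP k P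
  | .nu _ P => foP k P
  | .app V W => foV k V + foV k W
end

-- Duplicability factor.
mutual
def dV : Val → ℕ
  | .star => 1
  | .var _ => 1
  | .lam P => max (dP P) (foP 0 P)
  | .blam P => max (dP P) (foP 0 P)
  | .bang V => dV V
def dP : Proc → ℕ
  | .nil => 1
  | .par P Q => max (dP P) (dP Q)
  | .inp _ P => max (dP P) (foP 0 P)
  | .binp _ P => max (dP P) (foP 0 P)
  | .out _ V P => max (dV V) (dP P)
  | .nu _ P => dP P
  | .app V W => max (dV V) (dV W)
end

-- `n`-parametrized weight.
mutual
def wV (n : ℕ) : Val → ℕ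
  | .star => 1
  | .var _ => 1
  | .lam P => wP n P
  | .blam P => wP n P
  | .bang V => n * wV n V + 1
def wP (n : ℕ) : Proc → ℕ
  | .nil => 1
  | .par P Q => wP n P + wP n Q + 1
  | .inp _ P => wP n P + 1
  | .binp _ P => wP n P + 1
  | .out _ V P => wV n V + wP n P
  | .nu _ P => wP n P
  | .app V W => wV n V + wV n W + 1
end

/-- The weight of a process. -/
def weightP (P : Proc) : ℕ := wP (dP P) P
/-- The weight of a value. -/
def weightV (V : Val) : ℕ := wV (dV V) V

/-! ### Context entries under splitting and boxing -/

/-- The context entry of the de Bruijn index `k`; indices beyond the end of the context count as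
absent. -/
def entry (Γ : Ctx) (k : ℕ) : Option SMark := Γ.getD k none

@[simp] theorem entry_nil (k : ℕ) : entry [] k = none := by simp [entry]

@[simp] theorem entry_zero (e : Option SMark) (Γ : Ctx) : entry (e :: Γ) 0 = e := by simp [entry]

@[simp] theorem entry_succ (e : Option SMark) (Γ : Ctx) (k : ℕ) :
    entry (e :: Γ) (k + 1) = entry Γ k := by simp [entry]

theorem split_entry {Γ Γ₁ Γ₂ : Ctx} (h : Split Γ Γ₁ Γ₂) (k : ℕ) :
    SplitE (entry Γ k) (entry Γ₁ k) (entry Γ₂ k) := by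
  induction h generalizing k with
  | nil => simpa using SplitE.none
  | cons he _ ih =>
    cases k with
    | zero => simpa using he
    | succ k => simpa using ih k

theorem bangCtx_entry {Γ Δ : Ctx} (h : BangCtx Γ Δ) (k : ℕ) : BangE (entry Γ k) (entry Δ k) := by
  induction h generalizing k with
  | nil => simpa using BangE.none
  | cons he _ ih =>
    cases k with
    | zero => simpa using he
    | succ k => simpa using ih k

theorem split_none {Γ Γ₁ Γ₂ : Ctx} (h : Split Γ Γ₁ Γ₂) {k : ℕ} (hk : entry Γ k = none) :
    entry Γ₁ k = none ∧ entry Γ₂ k = none := by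
  have := split_entry h k
  generalize entry Γ k = a at *
  generalize entry Γ₁ k = b at *
  generalize entry Γ₂ k = c at *
  cases this <;> simp_all

theorem bang_none {Γ Δ : Ctx} (h : BangCtx Γ Δ) {k : ℕ}
    (hk : entry Δ k = none ∨ entry Δ k = some .para) : entry Γ k = none := by
  have := bangCtx_entry h k
  generalize entry Γ k = a at *
  generalize entry Δ k = b at *
  cases this <;> simp_all

theorem split_para {Γ Γ₁ Γ₂ : Ctx} (h : Split Γ Γ₁ Γ₂) {k : ℕ}
    (hk : entry Γ k = none ∨ entry Γ k = some .para) :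
    (entry Γ₁ k = none ∨ entry Γ₁ k = some .para) ∧
      (entry Γ₂ k = none ∨ entry Γ₂ k = some .para) := by
  have := split_entry h k
  generalize entry Γ k = a at *
  generalize entry Γ₁ k = b at *
  generalize entry Γ₂ k = c at *
  cases this <;> simp_all

/-! ### Absent variables do not occur -/

theorem entry_var_ne_none {Γ : Ctx} {x : ℕ} (h : WfV Γ (.var x)) : entry Γ x ≠ none := by
  induction x generalizing Γ with
  | zero => cases h <;> simp
  | succ x ih => cases h with
    | varThere _ h => simpa using ih h

mutual
/-- A variable whose context entry is absent does not occur. -/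
theorem foV_eq_zero {Γ : Ctx} {k : ℕ} (hk : entry Γ k = none) :
    ∀ V : Val, WfV Γ V → foV k V = 0
  | .star, _ => by simp [foV]
  | .var x, h => by
    have hx : x ≠ k := by
      rintro rfl
      exact entry_var_ne_none h hk
    simp [foV, hx]
  | .lam P, .lam h => by
    rw [foV]; exact foP_eq_zero (by simpa using hk) P h
  | .blam P, .blamBang h => by
    rw [foV]; exact foP_eq_zero (by simpa using hk) P h
  | .blam P, .blamPara h => by
    rw [foV]; exact foP_eq_zero (by simpa using hk) P h
  | .bang V, .bang hb h => by
    rw [foV]; exact foV_eq_zero (bang_none hb (.inl hk)) V h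
theorem foP_eq_zero {Γ : Ctx} {k : ℕ} (hk : entry Γ k = none) :
    ∀ P : Proc, WfP Γ P → foP k P = 0
  | .nil, _ => by simp [foP]
  | .par P Q, .par s hP hQ => by
    rw [foP, foP_eq_zero (split_none s hk).1 P hP, foP_eq_zero (split_none s hk).2 Q hQ]
  | .inp a P, .inp h => by
    rw [foP]; exact foP_eq_zero (by simpa using hk) P h
  | .binp a P, .binpBang h => by
    rw [foP]; exact foP_eq_zero (by simpa using hk) P h
  | .binp a P, .binpPara h => by
    rw [foP]; exact foP_eq_zero (by simpa using hk) P h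
  | .out a V P, .out s hV hP => by
    rw [foP, foV_eq_zero (split_none s hk).1 V hV, foP_eq_zero (split_none s hk).2 P hP]
  | .nu a P, .nu h => by
    rw [foP]; exact foP_eq_zero hk P h
  | .app V W, .app s hV hW => by
    rw [foP, foV_eq_zero (split_none s hk).1 V hV, foV_eq_zero (split_none s hk).2 W hW]
end

/-! ### Weight under lifting and change of parameter -/

mutual
theorem wV_lift (n c : ℕ) : ∀ V : Val, wV n (liftV c V) = wV n V
  | .star => by simp [liftV]
  | .var x => by rw [liftV]; split <;> simp [wV]
  | .lam P => by simp [liftV, wV, wP_lift n (c + 1) P]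
  | .blam P => by simp [liftV, wV, wP_lift n (c + 1) P]
  | .bang V => by simp [liftV, wV, wV_lift n c V]
theorem wP_lift (n c : ℕ) : ∀ P : Proc, wP n (liftP c P) = wP n P
  | .nil => by simp [liftP]
  | .par P Q => by simp [liftP, wP, wP_lift n c P, wP_lift n c Q]
  | .inp a P => by simp [liftP, wP, wP_lift n (c + 1) P]
  | .binp a P => by simp [liftP, wP, wP_lift n (c + 1) P]
  | .out a V P => by simp [liftP, wP, wV_lift n c V, wP_lift n c P]
  | .nu a P => by simp [liftP, wP, wP_lift n c P]
  | .app V W => by simp [liftP, wP, wV_lift n c V, wV_lift n c W]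
end

mutual
theorem wV_mono {m n : ℕ} (h : m ≤ n) : ∀ V : Val, wV m V ≤ wV n V
  | .star => by simp [wV]
  | .var x => by simp [wV]
  | .lam P => by simpa [wV] using wP_mono h P
  | .blam P => by simpa [wV] using wP_mono h P
  | .bang V => by simpa [wV] using Nat.mul_le_mul h (wV_mono h V)
theorem wP_mono {m n : ℕ} (h : m ≤ n) : ∀ P : Proc, wP m P ≤ wP n P
  | .nil => by simp [wP]
  | .par P Q => by have := wP_mono h P; have := wP_mono h Q; simp only [wP]; omega
  | .inp a P => by simpa [wP] using wP_mono h P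
  | .binp a P => by simpa [wP] using wP_mono h P
  | .out a V P => by have := wV_mono h V; have := wP_mono h P; simp only [wP]; omega
  | .nu a P => by simpa [wP] using wP_mono h P
  | .app V W => by have := wV_mono h V; have := wV_mono h W; simp only [wP]; omega
end

/-! ### Weight under substitution -/

mutual
/-- The weight bound for substitution at an index whose entry is §-marked or absent. -/
theorem wV_subst_le {m n : ℕ} (hmn : m ≤ n) {Γ : Ctx} {k : ℕ} (U : Val)
    (hk : entry Γ k = none ∨ entry Γ k = some .para) :
    ∀ V : Val, WfV Γ V → wV m (substV U k V) ≤ wV n V + foV k V * wV n U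
  | .star, _ => by simp [substV, wV]
  | .var x, _ => by
    have hU := wV_mono hmn U
    simp only [substV, foV]
    split
    · simp only [wV]; omega
    · split <;> simp [wV]
  | .lam P, .lam h => by
    have := wP_subst_le hmn (liftV 0 U) (k := k + 1) (by simpa using hk) P h
    simpa [substV, wV, foV, wV_lift] using this
  | .blam P, .blamBang h => by
    have := wP_subst_le hmn (liftV 0 U) (k := k + 1) (by simpa using hk) P h
    simpa [substV, wV, foV, wV_lift] using this
  | .blam P, .blamPara h => by
    have := wP_subst_le hmn (liftV 0 U) (k := k + 1) (by simpa using hk) P h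
    simpa [substV, wV, foV, wV_lift] using this
  | .bang V, .bang hb h => by
    -- The variable is absent from the box, so the factor `n` multiplies no copy of `U`.
    have h0 := bang_none hb hk
    have := wV_subst_le hmn U (.inl h0) V h
    rw [foV_eq_zero h0 V h] at this
    simp only [substV, wV, foV, foV_eq_zero h0 V h]
    have := Nat.mul_le_mul hmn this
    simpa using this
theorem wP_subst_le {m n : ℕ} (hmn : m ≤ n) {Γ : Ctx} {k : ℕ} (U : Val)
    (hk : entry Γ k = none ∨ entry Γ k = some .para) :
    ∀ P : Proc, WfP Γ P → wP m (substP U k P) ≤ wP n P + foP k P * wV n U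
  | .nil, _ => by simp [substP, wP]
  | .par P Q, .par s hP hQ => by
    have := wP_subst_le hmn U (split_para s hk).1 P hP
    have := wP_subst_le hmn U (split_para s hk).2 Q hQ
    simp only [substP, wP, foP, Nat.add_mul]; omega
  | .inp a P, .inp h => by
    have := wP_subst_le hmn (liftV 0 U) (k := k + 1) (by simpa using hk) P h
    rw [wV_lift] at this
    simp only [substP, wP, foP]; omega
  | .binp a P, .binpBang h => by
    have := wP_subst_le hmn (liftV 0 U) (k := k + 1) (by simpa using hk) P h
    rw [wV_lift] at this
    simp only [substP, wP, foP]; omega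
  | .binp a P, .binpPara h => by
    have := wP_subst_le hmn (liftV 0 U) (k := k + 1) (by simpa using hk) P h
    rw [wV_lift] at this
    simp only [substP, wP, foP]; omega
  | .out a V P, .out s hV hP => by
    have := wV_subst_le hmn U (split_para s hk).1 V hV
    have := wP_subst_le hmn U (split_para s hk).2 P hP
    simp only [substP, wP, foP, Nat.add_mul]; omega
  | .nu a P, .nu h => by
    simpa [substP, wP, foP] using wP_subst_le hmn U hk P h
  | .app V W, .app s hV hW => by
    have := wV_subst_le hmn U (split_para s hk).1 V hV
    have := wV_subst_le hmn U (split_para s hk).2 W hW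
    simp only [substP, wP, foP, Nat.add_mul]; omega
end

/-- Substitution lemma for the weight, §-case:  for a well-formed closed value
`V`, `n ≥ m ≥ 1`, and `R` (resp. `W`) well formed in a context whose variable
`x` (de Bruijn index `0`) is §-marked,
`W_m(R[V/x]) ≤ W_n(R) + n_o(x,R)·W_n(V)` (and similarly for values). -/
theorem weight_subst_para {V : Val} (hV : WfV [] V) {n m : ℕ}
    (hm : 1 ≤ m) (hmn : m ≤ n) :
    (∀ (Γ : Ctx) (R : Proc), WfP (some SMark.para :: Γ) R →
        wP m (substP V 0 R) ≤ wP n R + foP 0 R * wV n V) ∧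
    (∀ (Γ : Ctx) (W : Val), WfV (some SMark.para :: Γ) W →
        wV m (substV V 0 W) ≤ wV n W + foV 0 W * wV n V) := by
  exact ⟨fun _ R h => wP_subst_le hmn V (.inr (entry_zero _ _)) R h,
    fun _ W h => wV_subst_le hmn V (.inr (entry_zero _ _)) W h⟩
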